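/- Let M be a complex *-algebra. The following are equivalent: (i) M is an algebraic Baer *-algebra without Abelian summand; (ii) M is a finite-dimensional Baer *-algebra without Abelian summand. Moreover, if these hold, then M is *-isomorphic to a finite direct product of full complex matrix algebras M_{n_k}(ℂ) with every n_k ≥ 2. -/

import Mathlib

/-- A (possibly non-unital) complex algebra is *algebraic* if every element generates a
finite-dimensional subalgebra (equivalently, every element is a root of a nonzero
polynomial with complex coefficients). -/
def IsAlgebraicAlgebra (A : Type*) [NonUnitalRing A] [Module ℂ A] : Prop :=
  ∀ a : A, ∃ S : NonUnitalSubalgebra ℂ A, a ∈ S ∧ FiniteDimensional ℂ S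

/-- A pre-C*-norm on a complex `*`-algebra: a submultiplicative norm `σ` with
`σ (x* x) = σ x ^ 2`. -/
def HasPreCstarNorm (A : Type*) [NonUnitalRing A] [Module ℂ A] [Star A] : Prop :=
  ∃ σ : A → ℝ,
    (∀ a : A, σ a = 0 ↔ a = 0) ∧
    (∀ (c : ℂ) (a : A), σ (c • a) = ‖c‖ * σ a) ∧
    (∀ a b : A, σ (a + b) ≤ σ a + σ b) ∧
    (∀ a b : A, σ (a * b) ≤ σ a * σ b) ∧
    (∀ a : A, σ (star a * a) = σ a ^ 2)

/-- The involution is proper if `a* a = 0` implies `a = 0`. -/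
def HasProperInvolution (A : Type*) [NonUnitalRing A] [Star A] : Prop :=
  ∀ a : A, star a * a = 0 → a = 0

/-- Hermitian: every selfadjoint element has real spectrum (computed in the
unitization `ℂ ⊕ A`). -/
def IsHermitianStarAlgebra (A : Type*) [NonUnitalRing A] [Module ℂ A]
    [SMulCommClass ℂ A A] [IsScalarTower ℂ A A] [Star A] : Prop :=
  ∀ a : A, star a = a → ∀ z ∈ spectrum ℂ (a : Unitization ℂ A), z.im = 0

/-- Semisimple: the Jacobson radical is `{0}` (expressed via the unitization, whose
Jacobson radical meets `A` exactly in the Jacobson radical of `A`). -/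
def IsSemisimpleAlgebra (A : Type*) [NonUnitalRing A] [Module ℂ A]
    [SMulCommClass ℂ A A] [IsScalarTower ℂ A A] : Prop :=
  ∀ a : A, (a : Unitization ℂ A) ∈ (⊥ : Ideal (Unitization ℂ A)).jacobson → a = 0

/-- A Baer `*`-ring: the right annihilator of every nonempty subset is the principal
right ideal generated by a projection. -/
def IsBaerStarRing (A : Type*) [Mul A] [Zero A] [Star A] : Prop :=
  ∀ S : Set A, S.Nonempty → ∃ f : A, star f = f ∧ f * f = f ∧
    {y : A | ∀ s ∈ S, s * y = 0} = {z : A | ∃ x : A, z = f * x}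

/-- `A` has no Abelian summand: the only central projection `e` such that all
projections of the corner `eAe` are central in `eAe` is `e = 0`. -/
def HasNoAbelianSummand (A : Type*) [Mul A] [Zero A] [Star A] : Prop :=
  ∀ e : A, star e = e → e * e = e → (∀ x : A, e * x = x * e) →
    (∀ p : A, star p = p → p * p = p → e * p * e = p →
      ∀ x : A, p * (e * x * e) = (e * x * e) * p) → e = 0

/-!
In an algebraic Baer `*`-algebra the involution is proper, so a selfadjoint `a` has real spectrum
and the cofactor `(minpoly a / (X - μ))(a)` of an eigenvalue `μ` is a multiple of a projection. In
particular, if `p` and `q` are orthogonal projections with `p A q ≠ 0`, then some nonzero partial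
isometry lies in `p A q`.

There is no infinite orthogonal family of such pairs `(pₖ, qₖ)`. Otherwise let `rₖ` be the range
projections of the partial isometries, tilt `rₖ` towards the source projection so as to get a
projection `sₖ` with `rₖ sₖ rₖ = rₖ / (k + 1)`, and take the suprema `f` of the `rₖ` and `g` of the
`sₖ`: every `1 / (k + 1)` is an eigenvalue of the algebraic element `f g`.

Without Abelian summand, every nonzero central projection contains such a pair, so orthogonal
families of nonzero central projections are finite. Passing to central covers and using Ramsey's
theorem, all orthogonal families of nonzero projections are finite. Hence `1` is a finite sum of
orthogonal minimal projections, whose Murray–von Neumann classes are the matrix blocks; a class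
with a single member would be a central minimal projection, that is, an Abelian summand.
-/

open scoped ComplexStarModule

/-! ### Eigenvalues of algebraic elements -/

theorem IsAlgebraicAlgebra.isIntegral {A : Type*} [Ring A] [Algebra ℂ A]
    (hA : IsAlgebraicAlgebra A) : Algebra.IsIntegral ℂ A where
  isIntegral a := by
    obtain ⟨S, haS, _⟩ := hA a
    have : Module.Finite ℂ (Unitization ℂ S) :=
      Module.Finite.equiv (Unitization.linearEquiv ℂ ℂ S).symm
    simpa using (Algebra.IsIntegral.isIntegral (R := ℂ)
      ((⟨a, haS⟩ : S) : Unitization ℂ S)).map (NonUnitalSubalgebra.unitization S)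

theorem isAlgebraicAlgebra_of_finiteDimensional {A : Type*} [NonUnitalRing A] [Module ℂ A]
    [SMulCommClass ℂ A A] [IsScalarTower ℂ A A] [FiniteDimensional ℂ A] :
    IsAlgebraicAlgebra A := fun _ =>
  ⟨⊤, trivial, inferInstanceAs (FiniteDimensional ℂ (⊤ : Submodule ℂ A))⟩

theorem aeval_mul_eq_eval_smul {R A : Type*} [CommRing R] [Ring A] [Algebra R A] {a x : A} {μ : R}
    (h : a * x = μ • x) (p : Polynomial R) : Polynomial.aeval a p * x = p.eval μ • x := by
  have := Module.End.aeval_apply_of_mem_apply_eq_smul (f := Algebra.lmul R A a) (p := p) h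
  rwa [Polynomial.aeval_algHom_apply] at this

theorem finite_setOf_mul_eq_smul {K A : Type*} [Field K] [Ring A] [Algebra K A] {a : A}
    (ha : IsIntegral K a) : {μ : K | ∃ x ≠ 0, a * x = μ • x}.Finite := by
  refine (Polynomial.finite_setOfPred_isRoot (minpoly.ne_zero ha)).subset ?_
  rintro μ ⟨x, hx, hax⟩
  have h := aeval_mul_eq_eval_smul hax (minpoly K a)
  rw [minpoly.aeval, zero_mul] at h
  exact (smul_eq_zero.mp h.symm).resolve_right hx

theorem exists_mul_aeval_eq_smul_of_isRoot_minpoly {K A : Type*} [Field K] [Ring A] [Algebra K A]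
    {a : A} (ha : IsIntegral K a) {μ : K} (hμ : (minpoly K a).IsRoot μ) :
    ∃ k : Polynomial K, Polynomial.aeval a k ≠ 0 ∧
      a * Polynomial.aeval a k = μ • Polynomial.aeval a k := by
  obtain ⟨k, hk⟩ := Polynomial.dvd_iff_isRoot.mpr hμ
  have hk0 : k ≠ 0 := by
    rintro rfl
    exact minpoly.ne_zero ha (by rw [hk, mul_zero])
  refine ⟨k, fun h => ?_, ?_⟩
  · have hdeg := Polynomial.natDegree_le_natDegree (minpoly.degree_le_of_ne_zero K a hk0 h)
    rw [hk, Polynomial.natDegree_mul (Polynomial.X_sub_C_ne_zero μ) hk0,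
      Polynomial.natDegree_X_sub_C] at hdeg
    omega
  · have h := minpoly.aeval K a
    rwa [hk, map_mul, map_sub, Polynomial.aeval_X, Polynomial.aeval_C, sub_mul, sub_eq_zero,
      ← Algebra.smul_def] at h

theorem exists_isRoot_minpoly_ne_zero {K A : Type*} [Field K] [IsAlgClosed K] [Ring A]
    [Algebra K A] {a : A} (ha : IsIntegral K a) (hnil : ¬ IsNilpotent a) :
    ∃ μ ≠ 0, (minpoly K a).IsRoot μ := by
  by_contra! hroot
  have hroots : (minpoly K a).roots = Multiset.replicate _ 0 :=
    Multiset.eq_replicate_card.mpr fun μ hμ => by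
      by_contra hμ0
      exact hroot μ hμ0 (Polynomial.isRoot_of_mem_roots hμ)
  have hmin := (IsAlgClosed.splits (minpoly K a)).eq_prod_roots_of_monic (minpoly.monic ha)
  rw [hroots, Multiset.map_replicate, Multiset.prod_replicate, map_zero, sub_zero] at hmin
  refine hnil ⟨(minpoly K a).roots.card, ?_⟩
  calc a ^ (minpoly K a).roots.card
      = Polynomial.aeval a (Polynomial.X ^ (minpoly K a).roots.card : Polynomial K) := by
        rw [map_pow, Polynomial.aeval_X]
    _ = Polynomial.aeval a (minpoly K a) := congrArg _ hmin.symm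
    _ = 0 := minpoly.aeval K a

/-! ### Projections and partial isometries -/

theorem exists_isSelfAdjoint_mul_self_eq {t : ℝ} (ht : 0 ≤ t) :
    ∃ c : ℂ, IsSelfAdjoint c ∧ c * c = t :=
  ⟨(√t : ℝ), Complex.conj_ofReal _, by rw [← Complex.ofReal_mul, Real.mul_self_sqrt ht]⟩

theorem mul_comm_of_forall_mul_eq_mul_mul {A : Type*} [Semigroup A] [StarMul A] {q : A}
    (hq : IsSelfAdjoint q) (h : ∀ x, q * x = q * x * q) (x : A) : q * x = x * q := by
  have hstar := congrArg star (h (star x))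
  simp only [star_mul, star_star, hq.star_eq] at hstar
  rw [h, hstar, mul_assoc]

/-- Very orthogonal elements (the term is Berberian's, for projections): `p A q = 0`. -/
def VeryOrthogonal {A : Type*} [Mul A] [Zero A] (p q : A) : Prop :=
  ∀ x, p * x * q = 0

theorem VeryOrthogonal.symm {A : Type*} [NonUnitalRing A] [StarRing A] {p q : A}
    (hp : IsSelfAdjoint p) (hq : IsSelfAdjoint q) (h : VeryOrthogonal p q) :
    VeryOrthogonal q p := fun x => by
  simpa [hp.star_eq, hq.star_eq, mul_assoc] using congrArg star (h (star x))

/-- Partial isometries of a `*`-semigroup, through the equation `w w* w = w`. -/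
def IsPartialIsometry {A : Type*} [Mul A] [Star A] (w : A) : Prop :=
  w * star w * w = w

namespace IsPartialIsometry

section Semigroup

variable {A : Type*} [Semigroup A] [StarMul A] {v w : A}

protected theorem star (hw : IsPartialIsometry w) : IsPartialIsometry (star w) := by
  simpa [IsPartialIsometry, mul_assoc] using congrArg star hw

theorem isStarProjection_mul_star (hw : IsPartialIsometry w) :
    IsStarProjection (w * star w) where
  isIdempotentElem := by rw [IsIdempotentElem, ← mul_assoc, hw]
  isSelfAdjoint := .mul_star_self w

theorem isStarProjection_star_mul (hw : IsPartialIsometry w) :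
    IsStarProjection (star w * w) := by
  simpa using hw.star.isStarProjection_mul_star

theorem mul (hv : IsPartialIsometry v) (hw : IsPartialIsometry w)
    (h : star v * v = w * star w) : IsPartialIsometry (v * w) := by
  calc v * w * star (v * w) * (v * w)
      = v * (w * star w) * (star v * v) * w := by simp only [star_mul, mul_assoc]
    _ = v * star v * v * (w * star w * w) := by rw [h, ← h]; simp only [mul_assoc]
    _ = v * w := by rw [hv, hw]

end Semigroup

theorem mul_star_ne_zero {A : Type*} [MulZeroClass A] [Star A] {w : A} (hw : IsPartialIsometry w)
    (hw0 : w ≠ 0) : w * star w ≠ 0 := fun h =>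
  hw0 (by rw [← hw, h, zero_mul])

end IsPartialIsometry

/-- Murray–von Neumann equivalence of projections: the range and source projections of a common
partial isometry. -/
def MurrayVonNeumannEquiv {A : Type*} [Mul A] [Star A] (p q : A) : Prop :=
  ∃ w, IsPartialIsometry w ∧ w * star w = p ∧ star w * w = q

namespace MurrayVonNeumannEquiv

variable {A : Type*} [Semigroup A] [StarMul A] {p q r : A}

theorem refl (hp : IsStarProjection p) : MurrayVonNeumannEquiv p p := by
  have hpp : p * p = p := hp.isIdempotentElem
  exact ⟨p, by simp only [IsPartialIsometry, hp.isSelfAdjoint.star_eq, hpp],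
    by rw [hp.isSelfAdjoint.star_eq, hpp], by rw [hp.isSelfAdjoint.star_eq, hpp]⟩

theorem symm : MurrayVonNeumannEquiv p q → MurrayVonNeumannEquiv q p := by
  rintro ⟨w, hw, hwp, hwq⟩
  exact ⟨star w, hw.star, by rwa [star_star], by rwa [star_star]⟩

theorem trans : MurrayVonNeumannEquiv p q → MurrayVonNeumannEquiv q r →
    MurrayVonNeumannEquiv p r := by
  rintro ⟨v, hv, rfl, rfl⟩ ⟨w, hw, hvw, rfl⟩
  refine ⟨v * w, hv.mul hw hvw.symm, ?_, ?_⟩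
  · calc v * w * star (v * w) = v * (w * star w) * star v := by simp only [star_mul, mul_assoc]
      _ = v * star v * v * star v := by rw [hvw]; simp only [mul_assoc]
      _ = v * star v := by rw [hv]
  · calc star (v * w) * (v * w) = star w * (star v * v) * w := by simp only [star_mul, mul_assoc]
      _ = star w * (w * star w * w) := by rw [← hvw]; simp only [mul_assoc]
      _ = star w * w := by rw [hw]

theorem equivalence {ι : Type*} {e : ι → A} (he : ∀ i, IsStarProjection (e i)) :
    Equivalence fun i j => MurrayVonNeumannEquiv (e i) (e j) :=
  ⟨fun i => refl (he i), symm, trans⟩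

end MurrayVonNeumannEquiv

/-- A rotation of `w w*` towards the orthogonal projection `w* w`, by an angle of cosine `√t`. -/
theorem IsPartialIsometry.exists_isStarProjection_compression {A : Type*} [Ring A] [StarRing A]
    [Algebra ℂ A] [StarModule ℂ A] {w e : A} (hw : IsPartialIsometry w) (hww : w * w = 0)
    (he : IsSelfAdjoint e) (hew : e * w = w) (hwe : w * e = w) {t : ℝ} (ht0 : 0 ≤ t)
    (ht1 : t ≤ 1) :
    ∃ s, IsStarProjection s ∧ s * e = s ∧
      w * star w * s * (w * star w) = (t : ℂ) • (w * star w) := by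
  set p := w * star w with hp
  obtain ⟨a, has, ha⟩ := exists_isSelfAdjoint_mul_self_eq ht0
  obtain ⟨b, hbs, hb⟩ := exists_isSelfAdjoint_mul_self_eq (sub_nonneg.mpr ht1)
  have hpp : p * p = p := hw.isStarProjection_mul_star.isIdempotentElem
  have hps : star p = p := hw.isStarProjection_mul_star.isSelfAdjoint
  have hpw : p * w = w := hw
  have hwp : w * p = 0 := by rw [hp, ← mul_assoc, hww, zero_mul]
  have hpw' : p * star w = 0 := by simpa [hps] using congrArg star hwp
  have hpe : p * e = p := by
    rw [hp, mul_assoc, ← he.star_eq, ← star_mul, hew]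
  set u := a • p + b • w with hu
  have hus : star u = a • p + b • star w := by
    rw [hu, star_add, star_smul, star_smul, hps, has, hbs]
  have huu : u * star u = p := by
    rw [hus, hu]
    simp only [add_mul, mul_add, smul_mul_smul_comm, hpp, hwp, hpw', ← hp, smul_zero, add_zero,
      zero_add, ← add_smul, ha, hb, Complex.ofReal_sub, Complex.ofReal_one, add_sub_cancel,
      one_smul]
  have hpu : p * u = u := by simp only [hu, mul_add, mul_smul_comm, hpp, hpw]
  have hup : u * p = a • p := by
    simp only [hu, add_mul, smul_mul_assoc, hpp, hwp, smul_zero, add_zero]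
  have hpu' : p * star u = a • p := by
    simp only [hus, mul_add, mul_smul_comm, hpp, hpw', smul_zero, add_zero]
  have hue : u * e = u := by simp only [hu, add_mul, smul_mul_assoc, hpe, hwe]
  have hu_isom : IsPartialIsometry u := by rw [IsPartialIsometry, huu, hpu]
  refine ⟨star u * u, hu_isom.isStarProjection_star_mul, by rw [mul_assoc, hue], ?_⟩
  rw [← mul_assoc p, hpu', mul_assoc, hup, smul_mul_smul_comm, hpp, ha]

/-! ### Proper involutions -/

namespace HasProperInvolution

theorem eq_zero_of_mul_star_eq_zero {A : Type*} [NonUnitalRing A] [StarRing A]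
    (hA : HasProperInvolution A) {a : A} (ha : a * star a = 0) : a = 0 :=
  star_eq_zero.mp (hA _ (by rwa [star_star]))

theorem eq_zero_of_isNilpotent {A : Type*} [Ring A] [StarRing A] (hA : HasProperInvolution A)
    {a : A} (ha : IsSelfAdjoint a) (hnil : IsNilpotent a) : a = 0 := by
  have hpow : ∀ k : ℕ, a ^ 2 ^ k = 0 → a = 0 := by
    intro k
    induction k with
    | zero => simp
    | succ k ih =>
      intro h
      refine ih (hA _ ?_)
      rw [star_pow, ha.star_eq, ← pow_add, ← two_mul, ← pow_succ', h]
  obtain ⟨n, hn⟩ := hnil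
  exact hpow n (pow_eq_zero_of_le Nat.lt_two_pow_self.le hn)

variable {A : Type*} [Ring A] [StarRing A] [Algebra ℂ A] [StarModule ℂ A]

theorem isSelfAdjoint_of_mul_eq_smul (hA : HasProperInvolution A) {a v : A} {μ : ℂ}
    (ha : IsSelfAdjoint a) (hv : v ≠ 0) (hav : a * v = μ • v) : IsSelfAdjoint μ := by
  have hva : star v * a = star μ • star v := by
    simpa [ha.star_eq] using congrArg star hav
  have h : (star μ - μ) • (star v * v) = 0 := by
    rw [sub_smul, ← smul_mul_assoc, ← hva, mul_assoc, hav, mul_smul_comm, sub_self]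
  exact sub_eq_zero.mp ((smul_eq_zero.mp h).resolve_right fun hvv => hv (hA v hvv))

-- If `(X - μ) k` is the minimal polynomial of `a`, then `k(a)` is a multiple of a projection.
theorem exists_isStarProjection_mul_eq_smul (hA : HasProperInvolution A) {a : A}
    (ha : IsSelfAdjoint a) (hint : IsIntegral ℂ a) (ha0 : a ≠ 0) :
    ∃ μ : ℝ, μ ≠ 0 ∧ ∃ r, IsStarProjection r ∧ r ≠ 0 ∧ a * r = (μ : ℂ) • r := by
  obtain ⟨μ, hμ0, hμ⟩ :=
    exists_isRoot_minpoly_ne_zero hint fun h => ha0 (hA.eq_zero_of_isNilpotent ha h)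
  obtain ⟨k, hv0, hav⟩ := exists_mul_aeval_eq_smul_of_isRoot_minpoly hint hμ
  have hcomm : Commute a (Polynomial.aeval a k) := by
    simpa using (Polynomial.commute_X k).map (Polynomial.aeval a)
  set v := Polynomial.aeval a k
  set c := k.eval μ
  have hμs : star μ = μ := hA.isSelfAdjoint_of_mul_eq_smul ha hv0 hav
  have hvv : v * v = c • v := aeval_mul_eq_eval_smul hav k
  have hvsv : v * star v = c • star v := by
    refine aeval_mul_eq_eval_smul ?_ k
    simpa [ha.star_eq, hμs, hcomm.eq] using congrArg star (hcomm.eq.symm.trans hav)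
  have hcv : c • star v = star c • v := by
    have h := congrArg star hvsv
    rwa [star_mul, star_star, star_smul, star_star, hvsv] at h
  have hc0 : c ≠ 0 := by
    intro hc
    rw [hc, zero_smul] at hvsv
    exact hv0 (hA.eq_zero_of_mul_star_eq_zero hvsv)
  refine ⟨μ.re, ?_, c⁻¹ • v, ⟨?_, ?_⟩, smul_ne_zero (inv_ne_zero hc0) hv0, ?_⟩
  · rwa [← Complex.ofReal_ne_zero, Complex.conj_eq_iff_re.mp hμs]
  · rw [IsIdempotentElem, smul_mul_smul_comm, hvv, smul_smul, inv_mul_cancel_right₀ hc0]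
  · have hsv : star v = (c⁻¹ * star c) • v := by
      rw [mul_smul, ← hcv, inv_smul_smul₀ hc0]
    rw [IsSelfAdjoint, star_smul, hsv, smul_smul, star_inv₀, mul_left_comm,
      inv_mul_cancel₀ (star_ne_zero.mpr hc0), mul_one]
  · rw [Complex.conj_eq_iff_re.mp hμs, mul_smul_comm, hav, smul_comm]

theorem nonneg_of_mul_star_eq_smul (hA : HasProperInvolution A) {r y : A}
    (hr : IsStarProjection r) (hr0 : r ≠ 0) (hyr : y * r = 0) {μ : ℝ}
    (hyy : y * star y = (μ : ℂ) • r) : 0 ≤ μ := by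
  by_contra! hμ
  obtain ⟨t, hts, htt⟩ := exists_isSelfAdjoint_mul_self_eq (neg_nonneg.mpr hμ.le)
  have ht0 : t ≠ 0 := left_ne_zero_of_mul (by rw [htt]; exact_mod_cast (neg_pos.mpr hμ).ne')
  have hrr : r * r = r := hr.isIdempotentElem
  have hry : r * star y = 0 := by simpa [hr.isSelfAdjoint.star_eq] using congrArg star hyr
  have hsum : (y + t • r) * star (y + t • r) = 0 := by
    rw [star_add, star_smul, hr.isSelfAdjoint.star_eq, hts.star_eq, add_mul, mul_add, mul_add, hyy,
      mul_smul_comm, hyr, smul_mul_assoc, hry, smul_mul_smul_comm, hrr, htt]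
    simp
  have htr : (y + t • r) * r = t • r := by rw [add_mul, hyr, smul_mul_assoc, hrr, zero_add]
  rw [hA.eq_zero_of_mul_star_eq_zero hsum, zero_mul] at htr
  exact smul_ne_zero ht0 hr0 htr.symm

theorem exists_isPartialIsometry (hA : HasProperInvolution A) [Algebra.IsIntegral ℂ A] {p q : A}
    (hp : IsStarProjection p) (hq : IsStarProjection q) (hpq : p * q = 0)
    (h : ¬ VeryOrthogonal p q) :
    ∃ w ≠ 0, IsPartialIsometry w ∧ p * w = w ∧ w * q = w := by
  obtain ⟨y, hy⟩ := not_forall.mp h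
  set x := p * y * q with hx
  have hpx : p * x = x := by simp only [hx, ← mul_assoc, hp.isIdempotentElem.eq]
  have hxq : x * q = x := by rw [hx, mul_assoc, hq.isIdempotentElem.eq]
  obtain ⟨μ, hμ0, r, hr, hr0, hxr⟩ := hA.exists_isStarProjection_mul_eq_smul
    (.mul_star_self x) (Algebra.IsIntegral.isIntegral _)
    fun h0 => hy (hA.eq_zero_of_mul_star_eq_zero h0)
  have hrr : r * r = r := hr.isIdempotentElem
  have hpr : p * r = r := by
    refine smul_right_injective A (Complex.ofReal_ne_zero.mpr hμ0) ?_
    simp only [← mul_smul_comm, ← hxr, ← mul_assoc, hpx]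
  have hqr : q * r = 0 := by
    have hqp : q * p = 0 := by
      simpa [hp.isSelfAdjoint.star_eq, hq.isSelfAdjoint.star_eq] using congrArg star hpq
    rw [← hpr, ← mul_assoc, hqp, zero_mul]
  have hyy : r * x * star (r * x) = (μ : ℂ) • r := by
    rw [star_mul, hr.isSelfAdjoint.star_eq, mul_assoc, ← mul_assoc x, hxr, mul_smul_comm, hrr]
  have hyr : r * x * r = 0 := by rw [← hxq, mul_assoc, mul_assoc, hqr, mul_zero, mul_zero]
  have hμ : 0 < μ := (hA.nonneg_of_mul_star_eq_smul hr hr0 hyr hyy).lt_of_ne' hμ0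
  obtain ⟨t, hts, htt⟩ := exists_isSelfAdjoint_mul_self_eq hμ.le
  have ht0 : t ≠ 0 := left_ne_zero_of_mul (by rw [htt]; exact_mod_cast hμ0)
  have hww : t⁻¹ • (r * x) * star (t⁻¹ • (r * x)) = r := by
    rw [star_smul, star_inv₀, hts.star_eq, smul_mul_smul_comm, hyy, smul_smul, ← htt, ← mul_inv,
      inv_mul_cancel₀ (mul_ne_zero ht0 ht0), one_smul]
  refine ⟨t⁻¹ • (r * x), fun h0 => hr0 ?_, ?_, ?_, ?_⟩
  · rw [← hww, h0, zero_mul]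
  · rw [IsPartialIsometry, hww, mul_smul_comm, ← mul_assoc, hrr]
  · rw [mul_smul_comm, ← mul_assoc, hpr]
  · rw [smul_mul_assoc, mul_assoc, hxq]

end HasProperInvolution

/-! ### Finiteness in algebraic Baer `*`-algebras -/

theorem HasNoAbelianSummand.exists_not_veryOrthogonal {A : Type*} [NonUnitalRing A] [StarRing A]
    (hA : HasNoAbelianSummand A) {z : A} (hz : IsStarProjection z) (hcomm : ∀ x, z * x = x * z)
    (hz0 : z ≠ 0) : ∃ q, IsStarProjection q ∧ z * q = q ∧ ¬ VeryOrthogonal q (z - q) := by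
  by_contra! h
  refine hz0 (hA z hz.isSelfAdjoint.star_eq hz.isIdempotentElem hcomm fun p hps hpp hzpz x => ?_)
  have hzp : z * p = p := by rw [← hzpz, ← mul_assoc, ← mul_assoc, hz.isIdempotentElem]
  refine mul_comm_of_forall_mul_eq_mul_mul hps (fun y => ?_) _
  have hy : p * y * z = p * y * p :=
    sub_eq_zero.mp ((mul_sub _ _ _).symm.trans (h p ⟨hpp, hps⟩ hzp y))
  rw [← hy, mul_assoc, ← hcomm, ← mul_assoc, ← hcomm, hzp]

namespace IsBaerStarRing

section NonUnitalRing

variable {A : Type*} [NonUnitalRing A] [StarRing A]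

theorem exists_isStarProjection_annihilator (hA : IsBaerStarRing A) (S : Set A) :
    ∃ f, IsStarProjection f ∧ ∀ x, (∀ s ∈ S, s * x = 0) ↔ f * x = x := by
  obtain ⟨f, hfs, hff, hf⟩ := hA (insert 0 S) (Set.insert_nonempty 0 S)
  refine ⟨f, ⟨hff, hfs⟩, fun x => ?_⟩
  have hx := Set.ext_iff.mp hf x
  simp only [Set.mem_ofPred_eq, Set.forall_mem_insert, zero_mul, true_and] at hx
  rw [hx]
  constructor
  · rintro ⟨y, rfl⟩
    rw [← mul_assoc, hff]
  · exact fun h => ⟨x, h.symm⟩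

theorem exists_one (hA : IsBaerStarRing A) : ∃ u : A, (∀ x, u * x = x) ∧ ∀ x, x * u = x := by
  obtain ⟨u, hu, h⟩ := hA.exists_isStarProjection_annihilator ∅
  have hl : ∀ x, u * x = x := fun x => (h x).mp fun _ => False.elim
  exact ⟨u, hl, fun x => by simpa [hu.isSelfAdjoint.star_eq] using congrArg star (hl (star x))⟩

theorem hasProperInvolution (hA : IsBaerStarRing A) : HasProperInvolution A := fun a ha => by
  obtain ⟨f, hf, h⟩ := hA.exists_isStarProjection_annihilator {star a}
  have hfa : f * a = a := (h a).mp (by rintro _ rfl; exact ha)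
  have haf : star a * f = 0 := (h f).mpr hf.isIdempotentElem _ rfl
  rw [← star_eq_zero, ← hfa, star_mul, hf.isSelfAdjoint.star_eq, haf]

end NonUnitalRing

section Ring

variable {A : Type*} [Ring A] [StarRing A]

-- The projection is the supremum of the `r i`.
theorem exists_isStarProjection_forall_mul_eq (hA : IsBaerStarRing A) {ι : Type*} {e r : ι → A}
    (he : ∀ i, IsSelfAdjoint (e i)) (hort : Pairwise fun i j => e i * e j = 0)
    (hr : ∀ i, IsStarProjection (r i)) (hre : ∀ i, r i * e i = r i) :
    ∃ f, IsStarProjection f ∧ ∀ i, f * e i = r i := by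
  obtain ⟨g, hg, h⟩ := hA.exists_isStarProjection_annihilator (Set.range r)
  refine ⟨1 - g, hg.one_sub, fun i => ?_⟩
  have hgr : g * r i = 0 := by
    have hrg : r i * g = 0 := (h g).mpr hg.isIdempotentElem _ ⟨i, rfl⟩
    simpa [hg.isSelfAdjoint.star_eq, (hr i).isSelfAdjoint.star_eq] using congrArg star hrg
  have her : e i * r i = r i := by
    simpa [(he i).star_eq, (hr i).isSelfAdjoint.star_eq] using congrArg star (hre i)
  have hge : g * (e i - r i) = e i - r i := by
    refine (h _).mp ?_
    rintro _ ⟨j, rfl⟩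
    rcases eq_or_ne j i with rfl | hji
    · rw [mul_sub, hre, (hr j).isIdempotentElem, sub_self]
    · have hrej : r j * e i = 0 := by rw [← hre j, mul_assoc, hort hji, mul_zero]
      rw [mul_sub, ← her, ← mul_assoc, hrej, zero_mul, sub_zero]
  rw [mul_sub, hgr, sub_zero] at hge
  rw [sub_mul, one_mul, hge, sub_sub_cancel]

theorem exists_centralCover (hA : IsBaerStarRing A) (p : A) :
    ∃ z, IsStarProjection z ∧ (∀ x, z * x = x * z) ∧ p * z = p ∧
      ∀ x, VeryOrthogonal p x → z * x = 0 := by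
  obtain ⟨g, hg, h⟩ := hA.exists_isStarProjection_annihilator (Set.range (p * ·))
  simp only [Set.forall_mem_range] at h
  have hpg : ∀ x, p * x * g = 0 := (h g).mpr hg.isIdempotentElem
  have hgx : ∀ x, g * (x * g) = x * g := fun x =>
    (h _).mp fun y => by rw [← mul_assoc, mul_assoc p, hpg]
  have hcomm : ∀ x, g * x = x * g := mul_comm_of_forall_mul_eq_mul_mul hg.isSelfAdjoint fun x => by
    simpa [hg.isSelfAdjoint.star_eq, mul_assoc] using (congrArg star (hgx (star x))).symm
  refine ⟨1 - g, hg.one_sub, fun x => ?_, ?_, fun x hx => ?_⟩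
  · rw [sub_mul, mul_sub, one_mul, mul_one, hcomm]
  · have := hpg 1
    rw [mul_one] at this
    rw [mul_sub, mul_one, this, sub_zero]
  · rw [sub_mul, one_mul, (h x).mp hx, sub_self]

end Ring

variable {A : Type*} [Ring A] [StarRing A] [Algebra ℂ A] [StarModule ℂ A] [Algebra.IsIntegral ℂ A]
  {ι : Type*}

-- Otherwise rotate the range projections by angles tending to a right angle: the suprema `f` and
-- `g` of the original and of the rotated projections have a product with infinitely many
-- eigenvalues.
theorem finite_of_isPartialIsometry (hA : IsBaerStarRing A) {e w : ι → A}
    (he : ∀ i, IsSelfAdjoint (e i)) (hort : Pairwise fun i j => e i * e j = 0)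
    (hw : ∀ i, IsPartialIsometry (w i)) (hw0 : ∀ i, w i ≠ 0) (hww : ∀ i, w i * w i = 0)
    (hew : ∀ i, e i * w i = w i) (hwe : ∀ i, w i * e i = w i) : Finite ι := by
  by_contra hfin
  have := not_finite_iff_infinite.mp hfin
  let φ : ℕ ↪ ι := Infinite.natEmbedding ι
  have hort' : Pairwise fun m n => e (φ m) * e (φ n) = 0 := fun m n hmn =>
    hort (φ.injective.ne hmn)
  have hew' : ∀ i, star (w i) * e i = star (w i) := fun i => by
    simpa [(he i).star_eq] using congrArg star (hew i)
  choose s hs hse hst using fun n : ℕ =>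
    (hw (φ n)).exists_isStarProjection_compression (hww _) (he _) (hew _) (hwe _)
      (t := 1 / ((n : ℝ) + 1)) (by positivity) (div_le_one_of_le₀ (by simp) (by positivity))
  obtain ⟨f, -, hfe⟩ := hA.exists_isStarProjection_forall_mul_eq (fun n => he (φ n)) hort'
    (fun n => (hw (φ n)).isStarProjection_mul_star) fun n => by rw [mul_assoc, hew']
  obtain ⟨g, -, hge⟩ := hA.exists_isStarProjection_forall_mul_eq (fun n => he (φ n)) hort' hs hse
  have heig : ∀ n, f * g * (w (φ n) * star (w (φ n))) =
      ((1 / ((n : ℝ) + 1) : ℝ) : ℂ) • (w (φ n) * star (w (φ n))) := fun n => by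
    have hes : e (φ n) * s n = s n := by
      simpa [(he _).star_eq, (hs n).isSelfAdjoint.star_eq] using congrArg star (hse n)
    calc f * g * (w (φ n) * star (w (φ n)))
        = f * (g * e (φ n)) * (w (φ n) * star (w (φ n))) := by
          simp only [mul_assoc, ← mul_assoc (e (φ n)) (w (φ n)), hew]
      _ = f * e (φ n) * s n * (w (φ n) * star (w (φ n))) := by rw [hge, mul_assoc f (e _), hes]
      _ = _ := by rw [hfe, hst]
  have hinj : Function.Injective fun n : ℕ => ((1 / ((n : ℝ) + 1) : ℝ) : ℂ) := fun m n hmn => by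
    simpa using hmn
  refine Set.infinite_range_of_injective hinj
    ((finite_setOf_mul_eq_smul (Algebra.IsIntegral.isIntegral (R := ℂ) (f * g))).subset ?_)
  rintro _ ⟨n, rfl⟩
  exact ⟨_, (hw _).mul_star_ne_zero (hw0 _), heig n⟩

theorem finite_of_not_veryOrthogonal (hA : IsBaerStarRing A) {p q : ι → A}
    (hp : ∀ i, IsStarProjection (p i)) (hq : ∀ i, IsStarProjection (q i))
    (hpq : ∀ i, p i * q i = 0) (hort : Pairwise fun i j => (p i + q i) * (p j + q j) = 0)
    (h : ∀ i, ¬ VeryOrthogonal (p i) (q i)) : Finite ι := by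
  choose w hw0 hw hpw hwq using fun i =>
    hA.hasProperInvolution.exists_isPartialIsometry (hp i) (hq i) (hpq i) (h i)
  have hqp : ∀ i, q i * p i = 0 := fun i => by
    simpa [(hp i).isSelfAdjoint.star_eq, (hq i).isSelfAdjoint.star_eq]
      using congrArg star (hpq i)
  have hwp : ∀ i, w i * p i = 0 := fun i => by rw [← hwq, mul_assoc, hqp, mul_zero]
  have hqw : ∀ i, q i * w i = 0 := fun i => by rw [← hpw, ← mul_assoc, hqp, zero_mul]
  refine hA.finite_of_isPartialIsometry
    (fun i => (hp i).isSelfAdjoint.add (hq i).isSelfAdjoint) hort hw hw0 (fun i => ?_)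
    (fun i => ?_) fun i => ?_
  · calc w i * w i = w i * (p i * w i) := by rw [hpw]
      _ = 0 := by rw [← mul_assoc, hwp, zero_mul]
  · rw [add_mul, hpw, hqw, add_zero]
  · rw [mul_add, hwp, hwq, zero_add]

theorem finite_of_pairwise_mul_eq_zero_of_central (hA : IsBaerStarRing A)
    (hN : HasNoAbelianSummand A) {z : ι → A} (hz : ∀ i, IsStarProjection (z i))
    (hz0 : ∀ i, z i ≠ 0) (hcomm : ∀ i x, z i * x = x * z i)
    (hort : Pairwise fun i j => z i * z j = 0) : Finite ι := by
  choose q hq hzq hnot using fun i => hN.exists_not_veryOrthogonal (hz i) (hcomm i) (hz0 i)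
  refine hA.finite_of_not_veryOrthogonal hq
    (fun i => (hq i).sub_of_mul_eq_right (hz i) (hzq i)) (fun i => ?_) ?_ hnot
  · rw [mul_sub, ← hcomm, hzq, (hq i).isIdempotentElem, sub_self]
  · simpa only [add_sub_cancel] using hort

theorem finite_of_pairwise_veryOrthogonal (hA : IsBaerStarRing A) (hN : HasNoAbelianSummand A)
    {p : ι → A} (hp0 : ∀ i, p i ≠ 0) (hort : Pairwise fun i j => VeryOrthogonal (p i) (p j)) :
    Finite ι := by
  choose z hz hcomm hpz hzx using fun i => hA.exists_centralCover (p i)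
  refine hA.finite_of_pairwise_mul_eq_zero_of_central hN hz (fun i h => hp0 i ?_) hcomm
    fun i j hij => hzx i _ fun x => ?_
  · rw [← hpz, h, mul_zero]
  · rw [← hcomm, ← mul_assoc, hzx j _ (hort hij.symm), zero_mul]

-- Ramsey's theorem reduces to two cases: no two members of the family are very orthogonal, or all
-- are.
theorem finite_of_pairwise_mul_eq_zero (hA : IsBaerStarRing A) (hN : HasNoAbelianSummand A)
    {p : ι → A} (hp : ∀ i, IsStarProjection (p i)) (hp0 : ∀ i, p i ≠ 0)
    (hort : Pairwise fun i j => p i * p j = 0) : Finite ι := by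
  by_contra hfin
  have := not_finite_iff_infinite.mp hfin
  let φ : ℕ ↪ ι := Infinite.natEmbedding ι
  obtain ⟨g, hg | hg⟩ :=
    exists_increasing_or_nonincreasing_subseq' (fun i j => ¬ VeryOrthogonal (p i) (p j)) φ
  · have hort' : ∀ {m n}, m ≠ n → p (φ (g m)) * p (φ (g n)) = 0 := fun h =>
      hort (φ.injective.ne (g.injective.ne h))
    refine (inferInstance : Infinite ℕ).not_finite (hA.finite_of_not_veryOrthogonal
      (p := fun n => p (φ (g (2 * n)))) (q := fun n => p (φ (g (2 * n + 1)))) (fun _ => hp _)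
      (fun _ => hp _) (fun n => hort' (by omega)) (fun m n hmn => ?_) fun n => hg (2 * n))
    simp only [add_mul, mul_add]
    rw [hort' (by omega), hort' (by omega), hort' (by omega), hort' (by omega)]
    simp only [add_zero]
  · simp only [not_not] at hg
    refine (inferInstance : Infinite ℕ).not_finite (hA.finite_of_pairwise_veryOrthogonal hN
      (p := fun n => p (φ (g n))) (fun _ => hp0 _) fun m n hmn => ?_)
    rcases hmn.lt_or_gt with h | h
    · exact hg m n h
    · exact (hg n m h).symm (hp _).isSelfAdjoint (hp _).isSelfAdjoint

end IsBaerStarRing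

/-! ### Minimal projections -/

/-- Minimal elements among the nonzero projections, for the order `q ≤ p ↔ p * q = q`. -/
structure IsMinimalProjection {A : Type*} [Mul A] [Zero A] [Star A] (p : A) : Prop where
  isStarProjection : IsStarProjection p
  ne_zero : p ≠ 0
  eq_of_mul_eq : ∀ ⦃q⦄, IsStarProjection q → q ≠ 0 → p * q = q → q = p

namespace IsBaerStarRing

variable {A : Type*} [Ring A] [StarRing A] [Algebra ℂ A] [StarModule ℂ A] [Algebra.IsIntegral ℂ A]

-- The successive differences of a descending chain are pairwise orthogonal.
theorem wellFounded_isStarProjection (hA : IsBaerStarRing A) (hN : HasNoAbelianSummand A) :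
    WellFounded fun q p : A => IsStarProjection q ∧ IsStarProjection p ∧ p * q = q ∧ q ≠ p := by
  refine wellFounded_iff_isEmpty_descending_chain.mpr ⟨fun ⟨f, hf⟩ => ?_⟩
  have hle : ∀ {m n}, m ≤ n → f m * f n = f n := fun {m n} hmn => by
    induction n, hmn using Nat.le_induction with
    | base => exact (hf m).2.1.isIdempotentElem
    | succ n _ ih => rw [← (hf n).2.2.1, ← mul_assoc, ih]
  have hd : ∀ n, IsStarProjection (f n - f (n + 1)) := fun n =>
    (hf n).1.sub_of_mul_eq_right (hf n).2.1 (hf n).2.2.1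
  have hlt : ∀ {m n}, m < n → (f m - f (m + 1)) * (f n - f (n + 1)) = 0 := fun {m n} hmn => by
    rw [sub_mul, mul_sub, mul_sub, hle hmn.le, hle (by omega), hle hmn, hle (by omega), sub_self]
  refine (inferInstance : Infinite ℕ).not_finite (hA.finite_of_pairwise_mul_eq_zero hN hd
    (fun n => sub_ne_zero.mpr (hf n).2.2.2.symm) fun m n hmn => ?_)
  rcases hmn.lt_or_gt with h | h
  · exact hlt h
  · simpa [(hd _).isSelfAdjoint.star_eq, -star_sub] using congrArg star (hlt h)

theorem exists_isMinimalProjection (hA : IsBaerStarRing A) (hN : HasNoAbelianSummand A) {p : A}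
    (hp : IsStarProjection p) (hp0 : p ≠ 0) : ∃ q, IsMinimalProjection q ∧ p * q = q := by
  obtain ⟨q, ⟨hq, hq0, hpq⟩, hmin⟩ := (hA.wellFounded_isStarProjection hN).has_min
    {q | IsStarProjection q ∧ q ≠ 0 ∧ p * q = q} ⟨p, hp, hp0, hp.isIdempotentElem⟩
  refine ⟨q, ⟨hq, hq0, fun r hr hr0 hqr => ?_⟩, hpq⟩
  by_contra hrq
  exact hmin r ⟨hr, hr0, by rw [← hqr, ← mul_assoc, hpq]⟩ ⟨hr, hq, hqr, hrq⟩

theorem exists_completeOrthogonalIdempotents_isMinimalProjection (hA : IsBaerStarRing A)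
    (hN : HasNoAbelianSummand A) :
    ∃ (ι : Type) (_ : Fintype ι) (e : ι → A),
      CompleteOrthogonalIdempotents e ∧ ∀ i, IsMinimalProjection (e i) := by
  obtain ⟨g, ⟨hg, ι, _, e, he, hmin, hsum⟩, hgmin⟩ := (hA.wellFounded_isStarProjection hN).has_min
    {g | IsStarProjection g ∧ ∃ (ι : Type) (_ : Fintype ι) (e : ι → A),
      OrthogonalIdempotents e ∧ (∀ i, IsMinimalProjection (e i)) ∧ ∑ i, e i = 1 - g}
    ⟨1, .one A, Empty, inferInstance, Empty.elim, ⟨fun i => i.elim, fun i => i.elim⟩,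
      fun i => i.elim, by simp⟩
  rcases eq_or_ne g 0 with rfl | hg0
  · exact ⟨ι, inferInstance, e, ⟨he, by rw [hsum, sub_zero]⟩, hmin⟩
  obtain ⟨q, hq, hgq⟩ := hA.exists_isMinimalProjection hN hg hg0
  have hqg : q * g = q := by
    simpa [hg.isSelfAdjoint.star_eq, hq.isStarProjection.isSelfAdjoint.star_eq]
      using congrArg star hgq
  refine (hgmin (g - q) ⟨hq.isStarProjection.sub_of_mul_eq_right hg hgq, Option ι, inferInstance,
    _, he.option q hq.isStarProjection.isIdempotentElem ?_ ?_, ?_, ?_⟩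
    ⟨hq.isStarProjection.sub_of_mul_eq_right hg hgq, hg, ?_, ?_⟩).elim
  · rw [hsum, mul_sub, mul_one, hqg, sub_self]
  · rw [hsum, sub_mul, one_mul, hgq, sub_self]
  · rintro (_ | i)
    exacts [hq, hmin i]
  · simp only [Fintype.sum_option, Option.elim_none, Option.elim_some, hsum]
    abel
  · rw [mul_sub, hg.isIdempotentElem, hgq]
  · simpa using hq.ne_zero

end IsBaerStarRing

section Minimal

variable {A : Type*} [Ring A] [StarRing A] [Algebra ℂ A] [StarModule ℂ A] [Algebra.IsIntegral ℂ A]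

theorem IsMinimalProjection.exists_mul_mul_eq_smul {p : A} (hp : IsMinimalProjection p)
    (hA : HasProperInvolution A) (x : A) : ∃ c : ℂ, p * x * p = c • p := by
  have hpp : p * p = p := hp.isStarProjection.isIdempotentElem
  have hreal : ∀ a : A, IsSelfAdjoint a → ∃ c : ℂ, p * a * p = c • p := fun a ha => by
    by_cases h0 : p * a * p = 0
    · exact ⟨0, by rw [h0, zero_smul]⟩
    have hself : IsSelfAdjoint (p * a * p) := by
      simpa [hp.isStarProjection.isSelfAdjoint.star_eq] using ha.conjugate p
    obtain ⟨μ, hμ0, r, hr, hr0, har⟩ :=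
      hA.exists_isStarProjection_mul_eq_smul hself (Algebra.IsIntegral.isIntegral _) h0
    have hpr : p * r = r := by
      refine smul_right_injective A (Complex.ofReal_ne_zero.mpr hμ0) ?_
      simp only [← mul_smul_comm, ← har, ← mul_assoc, hpp]
    rw [hp.eq_of_mul_eq hr hr0 hpr, mul_assoc, hpp] at har
    exact ⟨μ, har⟩
  obtain ⟨c, hc⟩ := hreal _ (ℜ x).2
  obtain ⟨d, hd⟩ := hreal _ (ℑ x).2
  refine ⟨c + Complex.I * d, ?_⟩
  conv_lhs => rw [← realPart_add_I_smul_imaginaryPart x]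
  rw [mul_add, add_mul, mul_smul_comm, smul_mul_assoc, hc, hd, smul_smul, add_smul]

theorem IsMinimalProjection.murrayVonNeumannEquiv {p q : A} (hp : IsMinimalProjection p)
    (hq : IsMinimalProjection q) (hA : HasProperInvolution A) (hpq : p * q = 0)
    (h : ¬ VeryOrthogonal p q) : MurrayVonNeumannEquiv p q := by
  obtain ⟨w, hw0, hw, hpw, hwq⟩ :=
    hA.exists_isPartialIsometry hp.isStarProjection hq.isStarProjection hpq h
  have hqw : q * star w = star w := by
    simpa [hq.isStarProjection.isSelfAdjoint.star_eq] using congrArg star hwq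
  refine ⟨w, hw, hp.eq_of_mul_eq hw.isStarProjection_mul_star (hw.mul_star_ne_zero hw0) ?_,
    hq.eq_of_mul_eq hw.isStarProjection_star_mul ?_ ?_⟩
  · rw [← mul_assoc, hpw]
  · simpa using hw.star.mul_star_ne_zero (star_ne_zero.mpr hw0)
  · rw [← mul_assoc, hqw]

end Minimal

theorem HasNoAbelianSummand.exists_ne_not_veryOrthogonal {A ι : Type*} [Ring A] [StarRing A]
    [Fintype ι] (hA : HasNoAbelianSummand A) {e : ι → A} (he : CompleteOrthogonalIdempotents e)
    (hmin : ∀ i, IsMinimalProjection (e i)) (i : ι) :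
    ∃ j ≠ i, ¬ VeryOrthogonal (e i) (e j) := by
  by_contra! h
  have hcomm : ∀ x, e i * x = x * e i :=
    mul_comm_of_forall_mul_eq_mul_mul (hmin i).isStarProjection.isSelfAdjoint fun x =>
      calc e i * x = ∑ j, e i * x * e j := by rw [← Finset.mul_sum, he.complete, mul_one]
        _ = e i * x * e i := Fintype.sum_eq_single i fun j hj => h j hj x
  obtain ⟨q, hq, hiq, hnot⟩ :=
    hA.exists_not_veryOrthogonal (hmin i).isStarProjection hcomm (hmin i).ne_zero
  refine hnot fun x => ?_
  rcases eq_or_ne q 0 with rfl | hq0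
  · rw [zero_mul, zero_mul]
  · rw [(hmin i).eq_of_mul_eq hq hq0 hiq, sub_self, mul_zero]

/-! ### Matrix units -/

/-- The first rows `row k i = e₁ᵢ` of systems of matrix units of sizes `n k`, with corners
`corner k = e₁₁` such that `e₁₁ A e₁₁ = K e₁₁`; `coeff k` reads off the scalar. The systems for
distinct `k` lie in distinct summands of `A` and together they exhaust `A`. -/
structure MatrixUnitRows (K A : Type*) [Field K] [Ring A] [StarRing A] [Algebra K A]
    {ι : Type*} [Fintype ι] (n : ι → Type*) [∀ k, Fintype (n k)] where
  corner : ι → A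
  coeff : ι → A →ₗ[K] K
  row : ∀ k, n k → A
  isStarProjection_corner : ∀ k, IsStarProjection (corner k)
  corner_ne_zero : ∀ k, corner k ≠ 0
  corner_mul_mul_corner : ∀ k x, corner k * x * corner k = coeff k x • corner k
  veryOrthogonal_corner : Pairwise fun k l => VeryOrthogonal (corner k) (corner l)
  corner_mul_row : ∀ k i, corner k * row k i = row k i
  row_mul_star_row_self : ∀ k i, row k i * star (row k i) = corner k
  row_mul_star_row_of_ne : ∀ k, Pairwise fun i j => row k i * star (row k j) = 0
  sum_star_row_mul_row : ∑ k, ∑ i, star (row k i) * row k i = 1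

namespace MatrixUnitRows

variable {K A : Type*} [Field K] [Ring A] [StarRing A] [Algebra K A]
  {ι : Type*} [Fintype ι] {n : ι → Type*} [∀ k, Fintype (n k)] (u : MatrixUnitRows K A n)

theorem star_row_mul_corner (k : ι) (i : n k) :
    star (u.row k i) * u.corner k = star (u.row k i) := by
  simpa [(u.isStarProjection_corner k).isSelfAdjoint.star_eq]
    using congrArg star (u.corner_mul_row k i)

theorem eq_of_smul_corner_eq (k : ι) {c d : K} (h : c • u.corner k = d • u.corner k) : c = d :=
  smul_left_injective K (u.corner_ne_zero k) h

theorem row_mul_mul_star_row (k : ι) (i j : n k) (x : A) :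
    u.row k i * x * star (u.row k j) =
      u.coeff k (u.row k i * x * star (u.row k j)) • u.corner k := by
  rw [← u.corner_mul_mul_corner, mul_assoc _ _ (u.corner k), mul_assoc _ _ (u.corner k),
    star_row_mul_corner, ← mul_assoc, ← mul_assoc, corner_mul_row]

theorem row_mul_mul_star_row_of_ne {k l : ι} (hkl : k ≠ l) (i : n k) (j : n l) (x : A) :
    u.row k i * x * star (u.row l j) = 0 := by
  rw [← u.corner_mul_row, ← u.star_row_mul_corner, ← mul_assoc, mul_assoc (u.corner k),
    mul_assoc (u.corner k)]
  exact u.veryOrthogonal_corner hkl _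

/-- The blocks of matrix coefficients of an element of `A`. -/
def toMatrix : A →ₗ[K] ∀ k, Matrix (n k) (n k) K where
  toFun x k := .of fun i j => u.coeff k (u.row k i * x * star (u.row k j))
  map_add' x y := by
    ext k i j
    simp [mul_add, add_mul]
  map_smul' c x := by
    ext k i j
    simp

theorem toMatrix_smul_corner (x : A) (k : ι) (i j : n k) :
    u.toMatrix x k i j • u.corner k = u.row k i * x * star (u.row k j) :=
  (u.row_mul_mul_star_row k i j x).symm

theorem toMatrix_mul (x y : A) : u.toMatrix (x * y) = u.toMatrix x * u.toMatrix y := by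
  ext k i j
  refine u.eq_of_smul_corner_eq k ?_
  have hblock : ∀ l (a : n l),
      u.row k i * x * (star (u.row l a) * u.row l a) * (y * star (u.row k j)) =
        u.row k i * x * star (u.row l a) * (u.row l a * y * star (u.row k j)) := fun l a => by
    simp only [mul_assoc]
  calc u.toMatrix (x * y) k i j • u.corner k
      = u.row k i * x * (∑ l, ∑ a, star (u.row l a) * u.row l a) * (y * star (u.row k j)) := by
        rw [toMatrix_smul_corner, u.sum_star_row_mul_row, mul_one]
        simp only [mul_assoc]
    _ = ∑ l, ∑ a, u.row k i * x * star (u.row l a) * (u.row l a * y * star (u.row k j)) := by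
        simp only [Finset.mul_sum, Finset.sum_mul, hblock]
    _ = ∑ a, u.row k i * x * star (u.row k a) * (u.row k a * y * star (u.row k j)) :=
        Fintype.sum_eq_single k fun l hl => Finset.sum_eq_zero fun a _ => by
          rw [u.row_mul_mul_star_row_of_ne hl.symm, zero_mul]
    _ = (u.toMatrix x * u.toMatrix y) k i j • u.corner k := by
        simp only [← toMatrix_smul_corner, smul_mul_smul_comm,
          (u.isStarProjection_corner k).isIdempotentElem.eq, ← Finset.sum_smul, Pi.mul_apply,
          Matrix.mul_apply]

theorem toMatrix_star [StarRing K] [StarModule K A] (x : A) :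
    u.toMatrix (star x) = star (u.toMatrix x) := by
  ext k i j
  refine u.eq_of_smul_corner_eq k ?_
  rw [toMatrix_smul_corner, Pi.star_apply, Matrix.star_apply,
    ← (u.isStarProjection_corner k).isSelfAdjoint.star_eq, ← star_smul, toMatrix_smul_corner]
  simp only [star_mul, star_star, mul_assoc]

theorem toMatrix_injective : Function.Injective u.toMatrix := by
  refine (injective_iff_map_eq_zero _).mpr fun x hx => ?_
  have hzero : ∀ k i l j, u.row k i * x * star (u.row l j) = 0 := fun k i l j => by
    rcases eq_or_ne k l with rfl | hkl
    · rw [← toMatrix_smul_corner, hx]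
      exact zero_smul K _
    · exact u.row_mul_mul_star_row_of_ne hkl i j x
  have hterm : ∀ k i l j,
      star (u.row k i) * u.row k i * (x * (star (u.row l j) * u.row l j)) = 0 := fun k i l j => by
    calc star (u.row k i) * u.row k i * (x * (star (u.row l j) * u.row l j))
        = star (u.row k i) * (u.row k i * x * star (u.row l j)) * u.row l j := by
          simp only [mul_assoc]
      _ = 0 := by rw [hzero, mul_zero, zero_mul]
  rw [← one_mul x, ← mul_one x, ← u.sum_star_row_mul_row]
  simp only [Finset.sum_mul, Finset.mul_sum, hterm, Finset.sum_const_zero]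

theorem toMatrix_one [∀ k, DecidableEq (n k)] : u.toMatrix 1 = 1 := by
  ext k i j
  refine u.eq_of_smul_corner_eq k ?_
  rw [toMatrix_smul_corner, mul_one, Pi.one_apply]
  rcases eq_or_ne i j with rfl | hij
  · rw [u.row_mul_star_row_self, Matrix.one_apply_eq, one_smul]
  · rw [u.row_mul_star_row_of_ne k hij, Matrix.one_apply_ne hij, zero_smul]

theorem toMatrix_star_row_mul_row [DecidableEq ι] [∀ k, DecidableEq (n k)] (k : ι)
    (i j : n k) :
    u.toMatrix (star (u.row k i) * u.row k j) = Pi.single k (Matrix.single i j 1) := by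
  ext l a b
  refine u.eq_of_smul_corner_eq l ?_
  rw [toMatrix_smul_corner, ← mul_assoc, mul_assoc _ (u.row k j)]
  rcases eq_or_ne l k with rfl | hlk
  · rw [Pi.single_eq_same]
    rcases eq_or_ne a i with rfl | hai
    · rcases eq_or_ne j b with rfl | hjb
      · rw [u.row_mul_star_row_self, u.row_mul_star_row_self, Matrix.single_apply_same, one_smul,
          (u.isStarProjection_corner l).isIdempotentElem]
      · rw [u.row_mul_star_row_of_ne l hjb, mul_zero, Matrix.single_apply_of_col_ne _ _ hjb,
          zero_smul]
    · rw [u.row_mul_star_row_of_ne l hai, zero_mul, Matrix.single_apply_of_row_ne hai.symm,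
        zero_smul]
  · have h := u.row_mul_mul_star_row_of_ne hlk a i 1
    rw [mul_one] at h
    rw [h, zero_mul, Pi.single_eq_of_ne hlk]
    exact (zero_smul K _).symm

theorem toMatrix_surjective : Function.Surjective u.toMatrix := by
  classical
  rw [← LinearMap.range_eq_top, eq_top_iff]
  intro M _
  rw [← Finset.univ_sum_single M]
  refine sum_mem fun k _ => ?_
  have hM : Pi.single k (M k) =
      ∑ i, ∑ j, M k i j • u.toMatrix (star (u.row k i) * u.row k j) := by
    conv_lhs => rw [Matrix.matrix_eq_sum_single (M k)]
    simp only [← LinearMap.single_apply (R := K), map_sum, toMatrix_star_row_mul_row,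
      ← map_smul, Matrix.smul_single, smul_eq_mul, mul_one]
  rw [hM]
  exact sum_mem fun i _ => sum_mem fun j _ => Submodule.smul_mem _ _ ⟨_, rfl⟩

/-- The `*`-isomorphism of `A` with a product of matrix algebras given by matrix coefficients. -/
noncomputable def starAlgEquiv [StarRing K] [StarModule K A] [∀ k, DecidableEq (n k)] :
    A ≃⋆ₐ[K] ∀ k, Matrix (n k) (n k) K :=
  .ofBijective
    { AlgHom.ofLinearMap u.toMatrix u.toMatrix_one u.toMatrix_mul with
      map_star' := u.toMatrix_star : A →⋆ₐ[K] ∀ k, Matrix (n k) (n k) K }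
    ⟨u.toMatrix_injective, u.toMatrix_surjective⟩

end MatrixUnitRows

theorem exists_linearMap_mul_mul_eq_smul {K A : Type*} [Field K] [Ring A] [Algebra K A] {p : A}
    (hp : p ≠ 0) (h : ∀ x, ∃ c : K, p * x * p = c • p) :
    ∃ φ : A →ₗ[K] K, ∀ x, p * x * p = φ x • p := by
  choose c hc using h
  refine ⟨⟨⟨c, fun x y => ?_⟩, fun a x => ?_⟩, hc⟩ <;> apply smul_left_injective K hp
  · simp only [add_smul, ← hc, mul_add, add_mul]
  · simp only [RingHom.id_apply, smul_eq_mul, mul_smul, ← hc, mul_smul_comm, smul_mul_assoc]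

theorem exists_matrixUnitRows {A : Type*} [Ring A] [StarRing A] [Algebra ℂ A] [StarModule ℂ A]
    [Algebra.IsIntegral ℂ A] (hA : HasProperInvolution A) {ι : Type*} [Fintype ι] {n : ι → Type*}
    [∀ k, Fintype (n k)] [∀ k, Nonempty (n k)] {e : (Σ k, n k) → A}
    (he : CompleteOrthogonalIdempotents e) (hmin : ∀ a, IsMinimalProjection (e a))
    (hequiv : ∀ a b, MurrayVonNeumannEquiv (e a) (e b) ↔ a.1 = b.1) :
    Nonempty (MatrixUnitRows ℂ A n) := by
  let o : ∀ k, n k := fun k => Classical.arbitrary (n k)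
  choose φ hφ using fun k => exists_linearMap_mul_mul_eq_smul (hmin ⟨k, o k⟩).ne_zero
    ((hmin ⟨k, o k⟩).exists_mul_mul_eq_smul hA)
  choose w hw hwc hwe using fun k i => (hequiv ⟨k, o k⟩ ⟨k, i⟩).mpr rfl
  refine ⟨⟨fun k => e ⟨k, o k⟩, φ, w, fun k => (hmin _).isStarProjection,
    fun k => (hmin _).ne_zero, hφ, fun k l hkl => ?_, fun k i => ?_, hwc, fun k i j hij => ?_, ?_⟩⟩
  · by_contra h
    exact hkl ((hequiv _ _).mp ((hmin ⟨k, o k⟩).murrayVonNeumannEquiv (hmin ⟨l, o l⟩) hA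
      (he.ortho fun h => hkl (congrArg Sigma.fst h)) h))
  · rw [← hwc k i]
    exact hw k i
  · calc w k i * star (w k j)
        = w k i * (star (w k i) * w k i) * (star (w k j) * w k j * star (w k j)) := by
          have hj := (hw k j).star
          rw [IsPartialIsometry, star_star] at hj
          rw [hj, ← mul_assoc, hw]
      _ = w k i * (e ⟨k, i⟩ * e ⟨k, j⟩) * star (w k j) := by
          simp only [hwe, mul_assoc]
      _ = 0 := by rw [he.ortho (by simpa using hij), mul_zero, zero_mul]
  · simp only [hwe]
    rw [← Fintype.sum_sigma', he.complete]

/-! ### The structure theorem -/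

theorem exists_sigma_fin_equiv {α : Type*} [Finite α] (s : Setoid α) :
    ∃ (m : ℕ) (n : Fin m → ℕ) (σ : (Σ k, Fin (n k)) ≃ α),
      (∀ k, 0 < n k) ∧ ∀ a b, s (σ a) (σ b) ↔ a.1 = b.1 := by
  let f : α → Fin (Nat.card (Quotient s)) := fun x => Finite.equivFin _ (Quotient.mk s x)
  have hf : Function.Surjective f := (Equiv.surjective _).comp Quotient.mk_surjective
  let τ : ∀ k, Fin (Nat.card {x // f x = k}) ≃ {x // f x = k} := fun k => (Finite.equivFin _).symm
  refine ⟨_, _, (Equiv.sigmaCongrRight τ).trans (Equiv.sigmaFiberEquiv f), fun k => ?_,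
    fun a b => ?_⟩
  · obtain ⟨x, hx⟩ := hf k
    have : Nonempty {x // f x = k} := ⟨⟨x, hx⟩⟩
    exact Nat.card_pos
  · calc s (τ a.1 a.2) (τ b.1 b.2) ↔ f (τ a.1 a.2) = f (τ b.1 b.2) :=
          Quotient.eq.symm.trans (Equiv.apply_eq_iff_eq _).symm
      _ ↔ a.1 = b.1 := by rw [(τ a.1 a.2).2, (τ b.1 b.2).2]

namespace IsBaerStarRing

theorem exists_starAlgEquiv_of_ring {A : Type*} [Ring A] [StarRing A] [Algebra ℂ A]
    [StarModule ℂ A] [Algebra.IsIntegral ℂ A] (hA : IsBaerStarRing A)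
    (hN : HasNoAbelianSummand A) :
    ∃ (m : ℕ) (n : Fin m → ℕ), (∀ k, 2 ≤ n k) ∧
      Nonempty (A ≃⋆ₐ[ℂ] ∀ k, Matrix (Fin (n k)) (Fin (n k)) ℂ) := by
  obtain ⟨ι, _, e, he, hmin⟩ := hA.exists_completeOrthogonalIdempotents_isMinimalProjection hN
  obtain ⟨m, n, σ, hn, hσ⟩ := exists_sigma_fin_equiv
    ⟨_, MurrayVonNeumannEquiv.equivalence fun i => (hmin i).isStarProjection⟩
  have heσ : CompleteOrthogonalIdempotents (e ∘ σ) :=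
    (CompleteOrthogonalIdempotents.equiv σ).mpr he
  have : ∀ k, Nonempty (Fin (n k)) := fun k => ⟨⟨0, hn k⟩⟩
  obtain ⟨u⟩ := exists_matrixUnitRows hA.hasProperInvolution heσ (fun a => hmin (σ a)) hσ
  refine ⟨m, n, fun k => ?_, ⟨u.starAlgEquiv⟩⟩
  let a : Σ k, Fin (n k) := ⟨k, ⟨0, hn k⟩⟩
  obtain ⟨⟨l, j⟩, hne, hnot⟩ := hN.exists_ne_not_veryOrthogonal heσ (fun a => hmin (σ a)) a
  obtain rfl : k = l := (hσ a ⟨l, j⟩).mp <|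
    (hmin _).murrayVonNeumannEquiv (hmin _) hA.hasProperInvolution (heσ.ortho hne.symm) hnot
  refine Fin.nontrivial_iff_two_le.mp ⟨j, ⟨0, hn k⟩, fun h => hne ?_⟩
  rw [h]

theorem exists_starAlgEquiv {A : Type*} [NonUnitalRing A] [Module ℂ A] [SMulCommClass ℂ A A]
    [IsScalarTower ℂ A A] [StarRing A] [StarModule ℂ A] (hA : IsBaerStarRing A)
    (hN : HasNoAbelianSummand A) (halg : IsAlgebraicAlgebra A) :
    ∃ (m : ℕ) (n : Fin m → ℕ), (∀ k, 2 ≤ n k) ∧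
      Nonempty (A ≃⋆ₐ[ℂ] ∀ k, Matrix (Fin (n k)) (Fin (n k)) ℂ) := by
  obtain ⟨u, hu, hu'⟩ := hA.exists_one
  let ring : Ring A := { (inferInstance : NonUnitalRing A) with
    one := u
    one_mul := hu
    mul_one := hu' }
  let algebra : Algebra ℂ A := Algebra.ofModule smul_mul_assoc mul_smul_comm
  have : Algebra.IsIntegral ℂ A := halg.isIntegral
  exact exists_starAlgEquiv_of_ring hA hN

end IsBaerStarRing

/-- A complex `*`-algebra is an algebraic Baer `*`-algebra without
Abelian summand iff it is a finite-dimensional Baer `*`-algebra without Abelian summand;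
in that case it is `*`-isomorphic to a finite direct product of full complex matrix
algebras of size at least `2 × 2`. -/
theorem algebraic_baer_noAbelianSummand_iff (M : Type*) [NonUnitalRing M] [Module ℂ M]
    [SMulCommClass ℂ M M] [IsScalarTower ℂ M M] [StarRing M] [StarModule ℂ M] :
    ((IsAlgebraicAlgebra M ∧ IsBaerStarRing M ∧ HasNoAbelianSummand M) ↔
      (FiniteDimensional ℂ M ∧ IsBaerStarRing M ∧ HasNoAbelianSummand M)) ∧
    ((IsAlgebraicAlgebra M ∧ IsBaerStarRing M ∧ HasNoAbelianSummand M) →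
      ∃ (m : ℕ) (n : Fin m → ℕ), (∀ k, 2 ≤ n k) ∧
        Nonempty (M ≃⋆ₐ[ℂ] ∀ k, Matrix (Fin (n k)) (Fin (n k)) ℂ)) := by
  refine ⟨⟨fun ⟨halg, hB, hN⟩ => ⟨?_, hB, hN⟩, fun ⟨_, hB, hN⟩ =>
    ⟨isAlgebraicAlgebra_of_finiteDimensional, hB, hN⟩⟩,
    fun ⟨halg, hB, hN⟩ => hB.exists_starAlgEquiv hN halg⟩
  obtain ⟨m, n, -, ⟨Φ⟩⟩ := hB.exists_starAlgEquiv hN halg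
  let Φ' : M →ₗ[ℂ] ∀ k, Matrix (Fin (n k)) (Fin (n k)) ℂ := ⟨⟨Φ, map_add Φ⟩, map_smul Φ⟩
  exact Module.Finite.of_injective Φ' Φ.injective
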